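/- arXiv:2202.09203 — 3 statements merged into one kernel-verified Lean document; each statement's English description precedes it below -/
import Mathlib

section
/- Let κ > 0, let 0 < R' < R, let n be a nonnegative integer, and let ξ : [R', R] → ℂ be continuous. Suppose v : [R', R] → ℂ is twice continuously differentiable and satisfies the ordinary differential equation v''(ρ) + (2/ρ)·v'(ρ) + (κ² − n(n+1)/ρ²)·v(ρ) = −ξ(ρ) for ρ ∈ (R', R), together with the boundary condition v'(R) = (z_n^{(2)}(κR)/R)·v(R). Then for every ρ ∈ [R', R], v(ρ) = S_n(ρ)·v(R') + (iκ/2)·∫_{R'}^{ρ} t²·W_n(ρ, t)·ξ(t) dt + (iκ/2)·W_n(R', ρ)·∫_{R'}^{R} t²·S_n(t)·ξ(t) dt. -/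
/-!
Write `h_n^{(j)}(z) = C_j · e^{sz} z⁻¹ p_s(z⁻¹)` with `s = ± i`, where `p_s` is the reverse Bessel
polynomial `∑ (n+m)!/(m!(n-m)!2^m) s^m X^m` (`besselPoly`). The spherical Bessel equation for
`h_n^{(j)}` is the polynomial identity `X²p'' + 2Xp' - 2sp' = n(n+1)p` (`besselPoly_ode`), which is
the recurrence between consecutive coefficients. The Wronskian of the two Hankel functions,
multiplied by `z²`, is a polynomial in `z⁻¹`; its derivative vanishes by that identity, so it equals
its value `-2s` at `z⁻¹ = 0` (`besselPoly_wronskian`). No limit at infinity is needed. For real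
arguments `p_i` and `p_{-i}` are complex conjugates, so a zero of one is a zero of both and would
kill the Wronskian; hence `h_n^{(2)}` has no zero on `(0, ∞)`.

The solution formula is then a form of variation of constants (`variation_of_constants`). With
`f(ρ) = h_n^{(1)}(κρ)`, `g(ρ) = h_n^{(2)}(κρ)`, the functions `A = ρ²(v'g - vg')` and
`B = ρ²(v'f - vf')` satisfy `A' = -ρ²ξg` and `B' = -ρ²ξf`; the boundary condition says `A(R) = 0`.
Thus `A` and `B` are known up to the constant `B(R')`, and `A f - B g` is a constant multiple of `v`
by the Wronskian identity; evaluating at `R'` eliminates `B(R')`.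
-/


/-- Spherical Hankel function of the first kind, via the Rayleigh formula. -/
noncomputable def sphH1 (n : ℕ) (z : ℂ) : ℂ :=
  (-Complex.I) ^ (n + 1) * (Complex.exp (Complex.I * z) / z) *
    ∑ m ∈ Finset.range (n + 1),
      Complex.I ^ m * ((Nat.factorial (n + m) : ℂ) /
        ((Nat.factorial m : ℂ) * (Nat.factorial (n - m) : ℂ) * (2 * z) ^ m))

/-- Spherical Hankel function of the second kind, via the Rayleigh formula. -/
noncomputable def sphH2 (n : ℕ) (z : ℂ) : ℂ :=
  Complex.I ^ (n + 1) * (Complex.exp (-Complex.I * z) / z) *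
    ∑ m ∈ Finset.range (n + 1),
      (-Complex.I) ^ m * ((Nat.factorial (n + m) : ℂ) /
        ((Nat.factorial m : ℂ) * (Nat.factorial (n - m) : ℂ) * (2 * z) ^ m))

/-- `z_n^{(1)}(t) = t·h_n^{(1)′}(t)/h_n^{(1)}(t)`. -/
noncomputable def zH1 (n : ℕ) (t : ℝ) : ℂ :=
  (t : ℂ) * deriv (sphH1 n) (t : ℂ) / sphH1 n (t : ℂ)

/-- `z_n^{(2)}(t) = t·h_n^{(2)′}(t)/h_n^{(2)}(t)`. -/
noncomputable def zH2 (n : ℕ) (t : ℝ) : ℂ :=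
  (t : ℂ) * deriv (sphH2 n) (t : ℂ) / sphH2 n (t : ℂ)

/-- `S_n(ρ) = h_n^{(2)}(κρ)/h_n^{(2)}(κR')`. -/
noncomputable def Sfun (κ R' : ℝ) (n : ℕ) (ρ : ℝ) : ℂ :=
  sphH2 n ((κ * ρ : ℝ) : ℂ) / sphH2 n ((κ * R' : ℝ) : ℂ)

/-- `W_n(ρ, t) = h_n^{(1)}(κρ)·h_n^{(2)}(κt) − h_n^{(2)}(κρ)·h_n^{(1)}(κt)`. -/
noncomputable def Wfun (κ : ℝ) (n : ℕ) (ρ t : ℝ) : ℂ :=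
  sphH1 n ((κ * ρ : ℝ) : ℂ) * sphH2 n ((κ * t : ℝ) : ℂ)
    - sphH2 n ((κ * ρ : ℝ) : ℂ) * sphH1 n ((κ * t : ℝ) : ℂ)

open Polynomial in
/-- The reverse Bessel polynomial `∑_{m ≤ n} (n+m)!/(m!(n-m)!2^m) s^m X^m`, in the variable
`X = z⁻¹`, with the sign `s = ± i` of the exponential kept as a parameter. -/
noncomputable def besselPoly (s : ℂ) (n : ℕ) : ℂ[X] :=
  ∑ m ∈ Finset.range (n + 1),
    C (s ^ m * ((Nat.factorial (n + m) : ℂ) /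
      ((Nat.factorial m : ℂ) * (Nat.factorial (n - m) : ℂ) * 2 ^ m))) * X ^ m

/-- The Hankel function without its constant factor: `e^{sz} z⁻¹ p_s(z⁻¹)`. -/
noncomputable def hankelCore (s : ℂ) (n : ℕ) (z : ℂ) : ℂ :=
  Complex.exp (s * z) * (z⁻¹ * (besselPoly s n).eval z⁻¹)

open Polynomial in
/-- The derivative of `hankelCore`. -/
noncomputable def hankelCoreDeriv (s : ℂ) (n : ℕ) (z : ℂ) : ℂ :=
  Complex.exp (s * z) * (s * (z⁻¹ * (besselPoly s n).eval z⁻¹)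
    - z⁻¹ ^ 2 * ((besselPoly s n).eval z⁻¹ + z⁻¹ * (derivative (besselPoly s n)).eval z⁻¹))

theorem besselPoly_coeff (s : ℂ) (n k : ℕ) :
    (besselPoly s n).coeff k = if k ≤ n then s ^ k * ((Nat.factorial (n + k) : ℂ) /
      ((Nat.factorial k : ℂ) * (Nat.factorial (n - k) : ℂ) * 2 ^ k)) else 0 := by
  simp only [besselPoly, Polynomial.finsetSum_coeff, Polynomial.coeff_C_mul, Polynomial.coeff_X_pow]
  simp

theorem besselPoly_coeff_succ (s : ℂ) (hs : s ^ 2 = -1) (n k : ℕ) :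
    2 * s * ((k : ℂ) + 1) * (besselPoly s n).coeff (k + 1)
      = ((k : ℂ) * (k + 1) - n * (n + 1)) * (besselPoly s n).coeff k := by
  rw [besselPoly_coeff, besselPoly_coeff]
  rcases lt_trichotomy k n with h | h | h
  · obtain ⟨d, rfl⟩ : ∃ d, n = k + 1 + d := ⟨n - (k + 1), by omega⟩
    rw [if_pos (by omega), if_pos (by omega)]
    have e1 : k + 1 + d - (k + 1) = d := by omega
    have e2 : k + 1 + d - k = d + 1 := by omega
    have e3 : k + 1 + d + (k + 1) = (k + 1 + d + k) + 1 := by omega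
    rw [e1, e2, e3, Nat.factorial_succ (k + 1 + d + k), Nat.factorial_succ d, Nat.factorial_succ k]
    have h1 : (Nat.factorial k : ℂ) ≠ 0 := by exact_mod_cast Nat.factorial_ne_zero k
    have h2 : (Nat.factorial d : ℂ) ≠ 0 := by exact_mod_cast Nat.factorial_ne_zero d
    have h3 : (k : ℂ) + 1 ≠ 0 := by exact_mod_cast Nat.succ_ne_zero k
    have h4 : (d : ℂ) + 1 ≠ 0 := by exact_mod_cast Nat.succ_ne_zero d
    push_cast
    field_simp
    rw [pow_succ s k]
    linear_combination (s ^ k * (k + 1 + d + k + 1)) * (d + 1) * 2 * (Nat.factorial (k + 1 + d + k) : ℂ) * 2 ^ k * hs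
  · subst h
    simp
  · rw [if_neg (by omega), if_neg (by omega)]
    simp

open Polynomial in
/-- The spherical Bessel equation in terms of the polynomial factor and the variable `X = z⁻¹`. -/
theorem besselPoly_ode (s : ℂ) (hs : s ^ 2 = -1) (n : ℕ) :
    X ^ 2 * derivative (derivative (besselPoly s n)) + 2 * X * derivative (besselPoly s n)
      - C (2 * s) * derivative (besselPoly s n) = C ((n : ℂ) * (n + 1)) * besselPoly s n := by
  ext k
  have h := besselPoly_coeff_succ s hs n k
  have e : (2 : ℂ[X]) * X * derivative (besselPoly s n)
      = X * (C 2 * derivative (besselPoly s n)) := by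
    rw [show (C (2 : ℂ) : ℂ[X]) = 2 from rfl]; ring
  rw [e, pow_two, mul_assoc]
  rcases k with _ | _ | k
  · simp only [coeff_sub, coeff_add, coeff_C_zero, mul_coeff_zero, coeff_X_zero, coeff_derivative]
    push_cast at h ⊢
    linear_combination -h
  · simp only [coeff_sub, coeff_add, coeff_C_mul, coeff_X_mul, mul_coeff_zero, coeff_X_zero, coeff_C_zero,
      coeff_derivative]
    push_cast at h ⊢
    linear_combination -h
  · simp only [coeff_sub, coeff_add, coeff_C_mul, coeff_X_mul, coeff_derivative]
    push_cast at h ⊢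
    linear_combination -h

open Polynomial in
/-- The Wronskian of the two Hankel functions, up to sign and constant factors, as an identity in
`X = z⁻¹`. -/
theorem besselPoly_wronskian (s : ℂ) (hs : s ^ 2 = -1) (n : ℕ) :
    X ^ 2 * (besselPoly s n * derivative (besselPoly (-s) n)
        - derivative (besselPoly s n) * besselPoly (-s) n)
      + C (2 * s) * (besselPoly s n * besselPoly (-s) n) = C (2 * s) := by
  have hp := besselPoly_ode s hs n
  have hq := besselPoly_ode (-s) (by rw [neg_sq, hs]) n
  have hp0 : (besselPoly s n).coeff 0 = 1 := by
    rw [besselPoly_coeff]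
    simp [Nat.factorial_ne_zero]
  have hq0 : (besselPoly (-s) n).coeff 0 = 1 := by
    rw [besselPoly_coeff]
    simp [Nat.factorial_ne_zero]
  set p := besselPoly s n
  set q := besselPoly (-s) n
  have hd : derivative (X ^ 2 * (p * derivative q - derivative p * q) + C (2 * s) * (p * q)) = 0 := by
    simp only [derivative_add, derivative_sub, derivative_mul, derivative_X_pow, derivative_C]
    rw [mul_neg, C_neg] at hq
    simp only [Nat.cast_ofNat, Nat.add_one_sub_one, pow_one, map_ofNat]
    linear_combination p * hq - q * hp
  have h := eq_C_of_natDegree_eq_zero (derivative_eq_zero.1 hd)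
  rw [h]
  congr 1
  simp [mul_coeff_zero, hp0, hq0]

theorem hankelCore_wronskian (s : ℂ) (hs : s ^ 2 = -1) (n : ℕ) (z : ℂ) (hz : z ≠ 0) :
    z ^ 2 * (hankelCore s n z * hankelCoreDeriv (-s) n z
      - hankelCoreDeriv s n z * hankelCore (-s) n z) = -2 * s := by
  have h := congrArg (Polynomial.eval z⁻¹) (besselPoly_wronskian s hs n)
  simp only [Polynomial.eval_add, Polynomial.eval_mul, Polynomial.eval_sub, Polynomial.eval_pow,
    Polynomial.eval_X, Polynomial.eval_C] at h
  have he : Complex.exp (s * z) * Complex.exp (-s * z) = 1 := by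
    rw [← Complex.exp_add]; simp
  have hw : z * z⁻¹ = 1 := mul_inv_cancel₀ hz
  unfold hankelCore hankelCoreDeriv
  generalize z⁻¹ = w at *
  generalize Complex.exp (s * z) = E at *
  generalize Complex.exp (-s * z) = F at *
  generalize Polynomial.eval w (besselPoly s n) = p at *
  generalize Polynomial.eval w (besselPoly (-s) n) = q at *
  generalize Polynomial.eval w (Polynomial.derivative (besselPoly s n)) = p' at *
  generalize Polynomial.eval w (Polynomial.derivative (besselPoly (-s) n)) = q' at *
  have : z ^ 2 * (E * (w * p) * (F * (-s * (w * q) - w ^ 2 * (q + w * q')))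
      - E * (s * (w * p) - w ^ 2 * (p + w * p')) * (F * (w * q)))
      = -((E * F) * (z * w) ^ 2 * (w ^ 2 * (p * q' - p' * q) + 2 * s * (p * q))) := by ring
  rw [this, he, hw, h]; ring

theorem hasDerivAt_hankelCore (s : ℂ) (n : ℕ) (z : ℂ) (hz : z ≠ 0) :
    HasDerivAt (hankelCore s n) (hankelCoreDeriv s n z) z := by
  have hi : HasDerivAt (fun z : ℂ => z⁻¹) (-(z ^ 2)⁻¹) z := hasDerivAt_inv hz
  have he : HasDerivAt (fun z : ℂ => Complex.exp (s * z)) (Complex.exp (s * z) * (s * 1)) z :=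
    ((hasDerivAt_id z).const_mul s).cexp
  have hp : HasDerivAt (fun z : ℂ => (besselPoly s n).eval z⁻¹) _ z :=
    ((besselPoly s n).hasDerivAt z⁻¹).comp z hi
  refine (he.mul (hi.mul hp)).congr_deriv ?_
  unfold hankelCoreDeriv
  simp only [Pi.mul_apply, ← inv_pow]
  ring

theorem hasDerivAt_hankelCoreDeriv (s : ℂ) (hs : s ^ 2 = -1) (n : ℕ) (z : ℂ) (hz : z ≠ 0) :
    HasDerivAt (hankelCoreDeriv s n)
      (-(2 * z⁻¹) * hankelCoreDeriv s n z
        - (1 - n * (n + 1) * z⁻¹ ^ 2) * hankelCore s n z) z := by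
  have hi : HasDerivAt (fun z : ℂ => z⁻¹) (-(z ^ 2)⁻¹) z := hasDerivAt_inv hz
  have he : HasDerivAt (fun z : ℂ => Complex.exp (s * z)) (Complex.exp (s * z) * (s * 1)) z :=
    ((hasDerivAt_id z).const_mul s).cexp
  have hp : HasDerivAt (fun z : ℂ => (besselPoly s n).eval z⁻¹) _ z :=
    ((besselPoly s n).hasDerivAt z⁻¹).comp z hi
  have hp' : HasDerivAt (fun z : ℂ => (Polynomial.derivative (besselPoly s n)).eval z⁻¹) _ z :=
    ((Polynomial.derivative (besselPoly s n)).hasDerivAt z⁻¹).comp z hi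
  have h := congrArg (Polynomial.eval z⁻¹) (besselPoly_ode s hs n)
  simp only [Polynomial.eval_add, Polynomial.eval_mul, Polynomial.eval_sub, Polynomial.eval_pow,
    Polynomial.eval_X, Polynomial.eval_C, Polynomial.eval_ofNat] at h
  refine (he.mul (((hi.mul hp).const_mul s).sub
    ((hi.pow 2).mul (hp.add (hi.mul hp'))))).congr_deriv ?_
  unfold hankelCoreDeriv hankelCore
  simp only [Pi.mul_apply, Pi.add_apply, Pi.sub_apply, Pi.pow_apply, ← inv_pow, Nat.cast_ofNat,
    Nat.add_one_sub_one, pow_one]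
  linear_combination (Complex.exp (s * z) * z⁻¹ ^ 3) * h
    + Complex.exp (s * z) * z⁻¹ * (besselPoly s n).eval z⁻¹ * hs

theorem sphH1_eq (n : ℕ) : sphH1 n = fun z => (-Complex.I) ^ (n + 1) * hankelCore Complex.I n z := by
  funext z
  unfold sphH1 hankelCore besselPoly
  rw [Polynomial.eval_finsetSum, div_eq_mul_inv, mul_assoc, mul_assoc]
  congr 3
  refine Finset.sum_congr rfl fun m _ => ?_
  simp only [Polynomial.eval_mul, Polynomial.eval_pow, Polynomial.eval_X, Polynomial.eval_C,
    mul_pow, div_eq_mul_inv, mul_inv, inv_pow]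
  ring

theorem sphH2_eq (n : ℕ) : sphH2 n = fun z => Complex.I ^ (n + 1) * hankelCore (-Complex.I) n z := by
  funext z
  unfold sphH2 hankelCore besselPoly
  rw [Polynomial.eval_finsetSum, div_eq_mul_inv, mul_assoc, mul_assoc]
  congr 3
  refine Finset.sum_congr rfl fun m _ => ?_
  simp only [Polynomial.eval_mul, Polynomial.eval_pow, Polynomial.eval_X, Polynomial.eval_C,
    mul_pow, div_eq_mul_inv, mul_inv, inv_pow]
  ring

theorem besselPoly_eval_conj (n : ℕ) (x : ℝ) :
    (starRingEnd ℂ) ((besselPoly (-Complex.I) n).eval (x : ℂ))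
      = (besselPoly Complex.I n).eval (x : ℂ) := by
  unfold besselPoly
  have h2 : (starRingEnd ℂ) 2 = 2 := Complex.conj_ofNat 2
  simp [Polynomial.eval_finsetSum, h2]

/-- On the positive axis a zero of one Hankel function is, by conjugation, a zero of both, which the
Wronskian excludes. -/
theorem sphH2_ne_zero (n : ℕ) (x : ℝ) (hx : 0 < x) : sphH2 n (x : ℂ) ≠ 0 := by
  have hxc : (x : ℂ) ≠ 0 := by exact_mod_cast hx.ne'
  intro h
  rw [sphH2_eq] at h
  have h2 : (besselPoly (-Complex.I) n).eval ((x⁻¹ : ℝ) : ℂ) = 0 := by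
    simpa [hankelCore, hxc] using h
  have h1 : (besselPoly Complex.I n).eval ((x⁻¹ : ℝ) : ℂ) = 0 := by
    rw [← besselPoly_eval_conj, h2, map_zero]
  have hW := hankelCore_wronskian Complex.I (by simp) n x hxc
  rw [Complex.ofReal_inv] at h1 h2
  simp [hankelCore, h1, h2] at hW

/-- Variation of constants for `v'' + (2/ρ)v' + q v = -ξ`, where `f`, `g` solve the homogeneous
equation with `ρ²(f g' - f' g) = c`, and `v` satisfies at `R` the same Robin condition as `g`. -/
theorem variation_of_constants {a b : ℝ} (ha : 0 < a) (hab : a < b) {c : ℂ} (hc : c ≠ 0)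
    {q ξ f f' g g' v v' v'' : ℝ → ℂ} (hξ : ContinuousOn ξ (Set.Icc a b))
    (hf : ∀ r ∈ Set.Icc a b, HasDerivAt f (f' r) r)
    (hf' : ∀ r ∈ Set.Icc a b, HasDerivAt f' (-(2 / (r : ℂ)) * f' r - q r * f r) r)
    (hg : ∀ r ∈ Set.Icc a b, HasDerivAt g (g' r) r)
    (hg' : ∀ r ∈ Set.Icc a b, HasDerivAt g' (-(2 / (r : ℂ)) * g' r - q r * g r) r)
    (hW : ∀ r ∈ Set.Icc a b, (r : ℂ) ^ 2 * (f r * g' r - f' r * g r) = c)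
    (hga : g a ≠ 0)
    (hv : ∀ r ∈ Set.Icc a b, HasDerivWithinAt v (v' r) (Set.Icc a b) r)
    (hv' : ∀ r ∈ Set.Icc a b, HasDerivWithinAt v' (v'' r) (Set.Icc a b) r)
    (hode : ∀ r ∈ Set.Ioo a b, v'' r + (2 / (r : ℂ)) * v' r + q r * v r = -ξ r)
    (hbc : v' b * g b = v b * g' b) {r : ℝ} (hr : r ∈ Set.Icc a b) :
    v r = g r / g a * v a
      + c⁻¹ * (∫ t in a..r, (t : ℂ) ^ 2 * (f r * g t - g r * f t) * ξ t)
      + c⁻¹ * (f a * g r - g a * f r) * ∫ t in a..b, (t : ℂ) ^ 2 * (g t / g a) * ξ t := by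
  -- Both `A` (with `k = g`) and `B` (with `k = f`) are instances of the following.
  have key : ∀ k k' : ℝ → ℂ, (∀ r ∈ Set.Icc a b, HasDerivAt k (k' r) r) →
      (∀ r ∈ Set.Icc a b, HasDerivAt k' (-(2 / (r : ℂ)) * k' r - q r * k r) r) →
      ∀ x ∈ Set.Icc a b, IntervalIntegrable (fun t : ℝ => (t : ℂ) ^ 2 * k t * ξ t)
        MeasureTheory.volume a x ∧
      ∫ t in a..x, (t : ℂ) ^ 2 * k t * ξ t =
        (a : ℂ) ^ 2 * (v' a * k a - v a * k' a) - (x : ℂ) ^ 2 * (v' x * k x - v x * k' x) := by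
    intro k k' hk hk' x hx
    have hsub : Set.Icc a x ⊆ Set.Icc a b := Set.Icc_subset_Icc_right hx.2
    have ck : ContinuousOn k (Set.Icc a b) := fun r hr => (hk r hr).continuousAt.continuousWithinAt
    have ck' : ContinuousOn k' (Set.Icc a b) :=
      fun r hr => (hk' r hr).continuousAt.continuousWithinAt
    have cv : ContinuousOn v (Set.Icc a b) := fun r hr => (hv r hr).continuousWithinAt
    have cv' : ContinuousOn v' (Set.Icc a b) := fun r hr => (hv' r hr).continuousWithinAt
    have cr : ContinuousOn (fun r : ℝ => (r : ℂ) ^ 2) (Set.Icc a b) := by fun_prop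
    have hint : IntervalIntegrable (fun t : ℝ => (t : ℂ) ^ 2 * k t * ξ t)
        MeasureTheory.volume a x :=
      (((cr.mul ck).mul hξ).mono hsub).intervalIntegrable_of_Icc hx.1
    refine ⟨hint, ?_⟩
    have := intervalIntegral.integral_eq_sub_of_hasDerivAt_of_le
      (f := fun t : ℝ => -((t : ℂ) ^ 2 * (v' t * k t - v t * k' t)))
      (f' := fun t : ℝ => (t : ℂ) ^ 2 * k t * ξ t) hx.1
      ((cr.mul ((cv'.mul ck).sub (cv.mul ck'))).neg.mono hsub) ?_ hint
    · rw [this]; ring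
    · intro t ht
      have htb : t ∈ Set.Ioo a b := ⟨ht.1, ht.2.trans_le hx.2⟩
      have ht' : t ∈ Set.Icc a b := Set.Ioo_subset_Icc_self htb
      have hn : Set.Icc a b ∈ nhds t := Icc_mem_nhds htb.1 htb.2
      have hv1 := (hv t ht').hasDerivAt hn
      have hv2 := (hv' t ht').hasDerivAt hn
      have hid : HasDerivAt (fun t : ℝ => (t : ℂ)) 1 t := Complex.ofRealCLM.hasDerivAt
      have ht0 : (t : ℂ) ≠ 0 := by exact_mod_cast (ha.trans ht.1).ne'
      refine ((hid.pow 2).mul ((hv2.mul (hk t ht')).sub (hv1.mul (hk' t ht')))).neg.congr_deriv ?_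
      have ho := hode t htb
      simp only [Pi.mul_apply, Pi.sub_apply, Pi.pow_apply, Nat.cast_ofNat,
        Nat.add_one_sub_one, pow_one]
      rw [eq_neg_iff_add_eq_zero] at ho
      have hdiv : (2 / (t : ℂ)) * t = 2 := by field_simp
      linear_combination (-(t : ℂ) ^ 2 * k t) * ho
        + (t * (v' t * k t - v t * k' t)) * hdiv
  obtain ⟨ig, Ag⟩ := key g g' hg hg' r hr
  obtain ⟨jf, Bf⟩ := key f f' hf hf' r hr
  obtain ⟨-, Agb⟩ := key g g' hg hg' b ⟨hab.le, le_rfl⟩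
  rw [sub_eq_zero.2 hbc, mul_zero, sub_zero] at Agb
  have e1 : ∫ t in a..r, (t : ℂ) ^ 2 * (f r * g t - g r * f t) * ξ t
      = f r * (∫ t in a..r, (t : ℂ) ^ 2 * g t * ξ t)
        - g r * ∫ t in a..r, (t : ℂ) ^ 2 * f t * ξ t := by
    rw [← intervalIntegral.integral_const_mul, ← intervalIntegral.integral_const_mul,
      ← intervalIntegral.integral_sub (ig.const_mul _) (jf.const_mul _)]
    congr 1; funext t; ring
  have e2 : ∫ t in a..b, (t : ℂ) ^ 2 * (g t / g a) * ξ t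
      = (g a)⁻¹ * ∫ t in a..b, (t : ℂ) ^ 2 * g t * ξ t := by
    rw [← intervalIntegral.integral_const_mul]
    congr 1; funext t; ring
  rw [e1, e2, Ag, Bf, Agb]
  have Wr := hW r hr
  have Wa := hW a ⟨le_rfl, hab.le⟩
  field_simp
  linear_combination (-v r * g a) * Wr + g r * v a * Wa

/-- solution formula for the ODE
`v'' + (2/ρ)v' + (κ² − n(n+1)/ρ²)v = −ξ` on `(R', R)` with boundary condition
`v'(R) = (z_n^{(2)}(κR)/R)·v(R)`:
`v(ρ) = S_n(ρ)v(R') + (iκ/2)∫_{R'}^{ρ} t² W_n(ρ,t) ξ(t) dt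
  + (iκ/2) W_n(R',ρ) ∫_{R'}^{R} t² S_n(t) ξ(t) dt`. -/
theorem stmt6 (κ R' R : ℝ) (hκ : 0 < κ) (hR' : 0 < R') (hRR : R' < R)
    (n : ℕ) (ξ : ℝ → ℂ) (hξ : ContinuousOn ξ (Set.Icc R' R))
    (v v' v'' : ℝ → ℂ)
    (hv : ∀ ρ ∈ Set.Icc R' R, HasDerivWithinAt v (v' ρ) (Set.Icc R' R) ρ)
    (hv' : ∀ ρ ∈ Set.Icc R' R, HasDerivWithinAt v' (v'' ρ) (Set.Icc R' R) ρ)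
    (hv'' : ContinuousOn v'' (Set.Icc R' R))
    (hode : ∀ ρ ∈ Set.Ioo R' R,
      v'' ρ + (2 / (ρ : ℂ)) * v' ρ +
          ((κ : ℂ) ^ 2 - (n : ℂ) * ((n : ℂ) + 1) / (ρ : ℂ) ^ 2) * v ρ = -ξ ρ)
    (hbc : v' R = (zH2 n (κ * R) / (R : ℂ)) * v R) :
    ∀ ρ ∈ Set.Icc R' R,
      v ρ = Sfun κ R' n ρ * v R' +
          (Complex.I * κ / 2) * (∫ t in R'..ρ, (t : ℂ) ^ 2 * Wfun κ n ρ t * ξ t) +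
          (Complex.I * κ / 2) * Wfun κ n R' ρ *
            ∫ t in R'..R, (t : ℂ) ^ 2 * Sfun κ R' n t * ξ t := by
  have hI : Complex.I ^ 2 = -1 := Complex.I_sq
  have hI' : (-Complex.I) ^ 2 = -1 := by rw [neg_sq, hI]
  have hκc : (κ : ℂ) ≠ 0 := by exact_mod_cast hκ.ne'
  have hR : 0 < R := hR'.trans hRR
  have hpos : ∀ r ∈ Set.Icc R' R, (r : ℂ) ≠ 0 := fun r hr => by
    exact_mod_cast (hR'.trans_le hr.1).ne'
  have hne : ∀ r ∈ Set.Icc R' R, ((κ * r : ℝ) : ℂ) ≠ 0 := fun r hr => by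
    rw [Complex.ofReal_mul]; exact mul_ne_zero hκc (hpos r hr)
  have hscale : ∀ r : ℝ, HasDerivAt (fun t : ℝ => ((κ * t : ℝ) : ℂ)) (κ : ℂ) r := fun r => by
    simpa using ((hasDerivAt_id r).const_mul κ).ofReal_comp
  have d1 : ∀ s C : ℂ, ∀ r ∈ Set.Icc R' R,
      HasDerivAt (fun t : ℝ => C * hankelCore s n ((κ * t : ℝ) : ℂ))
        (C * (hankelCoreDeriv s n ((κ * r : ℝ) : ℂ) * κ)) r := fun s C r hr =>
    (HasDerivAt.comp r (hasDerivAt_hankelCore s n _ (hne r hr)) (hscale r)).const_mul C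
  have d2 : ∀ s C : ℂ, s ^ 2 = -1 → ∀ r ∈ Set.Icc R' R,
      HasDerivAt (fun t : ℝ => C * (hankelCoreDeriv s n ((κ * t : ℝ) : ℂ) * κ))
        (-(2 / (r : ℂ)) * (C * (hankelCoreDeriv s n ((κ * r : ℝ) : ℂ) * κ))
          - ((κ : ℂ) ^ 2 - (n : ℂ) * ((n : ℂ) + 1) / (r : ℂ) ^ 2)
            * (C * hankelCore s n ((κ * r : ℝ) : ℂ))) r := fun s C hs r hr => by
    refine ((((hasDerivAt_hankelCoreDeriv s hs n _ (hne r hr)).comp r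
      (hscale r)).mul_const (κ : ℂ)).const_mul C).congr_deriv ?_
    have := hpos r hr
    push_cast
    field_simp
  have hW : ∀ r ∈ Set.Icc R' R, (r : ℂ) ^ 2 *
      (((-Complex.I) ^ (n + 1) * hankelCore Complex.I n ((κ * r : ℝ) : ℂ)) *
        (Complex.I ^ (n + 1) * (hankelCoreDeriv (-Complex.I) n ((κ * r : ℝ) : ℂ) * κ))
      - ((-Complex.I) ^ (n + 1) * (hankelCoreDeriv Complex.I n ((κ * r : ℝ) : ℂ) * κ)) *
        (Complex.I ^ (n + 1) * hankelCore (-Complex.I) n ((κ * r : ℝ) : ℂ)))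
      = -2 * Complex.I / κ := fun r hr => by
    have h := hankelCore_wronskian Complex.I hI n _ (hne r hr)
    have hC : (-Complex.I) ^ (n + 1) * Complex.I ^ (n + 1) = 1 := by
      rw [← mul_pow]; simp
    rw [eq_div_iff hκc, ← h]
    push_cast
    linear_combination ((r : ℂ) ^ 2 * κ ^ 2 *
      (hankelCore Complex.I n (κ * r) * hankelCoreDeriv (-Complex.I) n (κ * r)
        - hankelCoreDeriv Complex.I n (κ * r) * hankelCore (-Complex.I) n (κ * r))) * hC
  have hg0 : ∀ r : ℝ, 0 < r → Complex.I ^ (n + 1) * hankelCore (-Complex.I) n ((κ * r : ℝ) : ℂ) ≠ 0 :=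
    fun r hr => by
      have := sphH2_ne_zero n (κ * r) (mul_pos hκ hr)
      rwa [sphH2_eq] at this
  have hRm : R ∈ Set.Icc R' R := ⟨hRR.le, le_rfl⟩
  -- The condition `v'(R) = (z_n^{(2)}(κR)/R) v(R)` with the denominator cleared.
  have hbc' : v' R * (Complex.I ^ (n + 1) * hankelCore (-Complex.I) n ((κ * R : ℝ) : ℂ))
      = v R * (Complex.I ^ (n + 1) * (hankelCoreDeriv (-Complex.I) n ((κ * R : ℝ) : ℂ) * κ)) := by
    have hd : deriv (sphH2 n) ((κ * R : ℝ) : ℂ)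
        = Complex.I ^ (n + 1) * hankelCoreDeriv (-Complex.I) n ((κ * R : ℝ) : ℂ) := by
      rw [sphH2_eq]
      exact ((hasDerivAt_hankelCore _ n _ (hne R hRm)).const_mul _).deriv
    rw [hbc, zH2, hd, sphH2_eq]
    have h1 := hg0 R hR
    have h2 := hpos R hRm
    rw [div_div, div_mul_eq_mul_div, div_mul_eq_mul_div, div_eq_iff (mul_ne_zero h1 h2)]
    push_cast
    ring
  have hc : -2 * Complex.I / (κ : ℂ) ≠ 0 := by simp [hκc]
  have hcinv : (-2 * Complex.I / (κ : ℂ))⁻¹ = Complex.I * κ / 2 := by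
    rw [inv_div, div_eq_div_iff (by simp) two_ne_zero]
    linear_combination (2 * (κ : ℂ)) * hI
  intro ρ hρ
  have := variation_of_constants hR' hRR hc hξ (d1 Complex.I _) (d2 Complex.I _ hI)
    (d1 (-Complex.I) _) (d2 (-Complex.I) _ hI') hW (hg0 R' hR') hv hv' hode hbc' hρ
  rw [hcinv] at this
  simpa only [Sfun, Wfun, sphH1_eq, sphH2_eq] using this
end

section
/- Let κ > 0, let 0 < R' < R, let n be a nonnegative integer, and let ξ : [R', R] → ℂ be continuous. Suppose v : [R', R] → ℂ is twice continuously differentiable and satisfies v''(ρ) + (2/ρ)·v'(ρ) + (κ² − n(n+1)/ρ²)·v(ρ) = −ξ(ρ) for ρ ∈ (R', R), together with the boundary condition v'(R) = (z_n^{(2)}(κR)/R)·v(R). Then v(R) = S_n(R)·v(R') + (iκ/2)·S_n(R)·∫_{R'}^{R} t²·W_n(R', t)·ξ(t) dt. -/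
/-- Coefficient of `w ^ m` in the polynomial factor of the spherical Hankel function with exponential
`e^{sz}`; it is cut off explicitly for `m > n`, where the subtraction `n - m` would truncate. -/
noncomputable def hankelCoeff (s : ℂ) (n m : ℕ) : ℂ :=
  if m ≤ n then
    s ^ m * ((Nat.factorial (n + m) : ℂ) /
      ((Nat.factorial m : ℂ) * (Nat.factorial (n - m) : ℂ) * 2 ^ m))
  else 0

/-- The polynomial `p` with `h_n(z) = (-s)^(n+1) (e^{sz} / z) p(1/z)`, where `s = i` for the first
kind and `s = -i` for the second. -/
noncomputable def hankelPoly (s : ℂ) (n : ℕ) : Polynomial ℂ :=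
  ∑ m ∈ Finset.range (n + 1), Polynomial.monomial m (hankelCoeff s n m)

/-- The spherical Hankel functions of both kinds at once, `s = ±i`. -/
noncomputable def hankel (s : ℂ) (n : ℕ) (z : ℂ) : ℂ :=
  (-s) ^ (n + 1) * Complex.exp (s * z) * (z⁻¹ * (hankelPoly s n).eval z⁻¹)

/-- The derivative of `hankel s n`, in closed form. -/
noncomputable def hankelDeriv (s : ℂ) (n : ℕ) (z : ℂ) : ℂ :=
  (-s) ^ (n + 1) * Complex.exp (s * z) *
    (s * z⁻¹ * (hankelPoly s n).eval z⁻¹ - z⁻¹ ^ 2 * (hankelPoly s n).eval z⁻¹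
      - z⁻¹ ^ 3 * (hankelPoly s n).derivative.eval z⁻¹)

lemma coeff_hankelPoly (s : ℂ) (n m : ℕ) : (hankelPoly s n).coeff m = hankelCoeff s n m := by
  simp only [hankelPoly, Polynomial.finsetSum_coeff, Polynomial.coeff_monomial,
    Finset.sum_ite_eq', Finset.mem_range]
  split_ifs with h
  · rfl
  · rw [hankelCoeff, if_neg (by omega)]

lemma hankelCoeff_succ {s : ℂ} (hs : s ^ 2 = -1) (n m : ℕ) :
    2 * s * ((m : ℂ) + 1) * hankelCoeff s n (m + 1)
      = ((m : ℂ) * (m + 1) - n * (n + 1)) * hankelCoeff s n m := by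
  unfold hankelCoeff
  rcases lt_trichotomy m n with h | h | h
  · rw [if_pos (by omega), if_pos h.le]
    obtain ⟨k, rfl⟩ := Nat.exists_eq_add_of_lt h
    have e1 : m + k + 1 - (m + 1) = k := by omega
    have e2 : m + k + 1 - m = k + 1 := by omega
    have e3 : m + k + 1 + (m + 1) = (m + k + 1 + m) + 1 := by omega
    rw [e1, e2, e3, Nat.factorial_succ (m + k + 1 + m), Nat.factorial_succ m, Nat.factorial_succ k]
    have h1 : (Nat.factorial m : ℂ) ≠ 0 := by exact_mod_cast Nat.factorial_ne_zero _
    have h2 : (Nat.factorial k : ℂ) ≠ 0 := by exact_mod_cast Nat.factorial_ne_zero _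
    have h3 : (m : ℂ) + 1 ≠ 0 := by exact_mod_cast Nat.succ_ne_zero m
    have h4 : (k : ℂ) + 1 ≠ 0 := by exact_mod_cast Nat.succ_ne_zero k
    push_cast
    field_simp
    rw [pow_succ s m, pow_succ (2 : ℂ) m]
    linear_combination (2 * s ^ m * 2 ^ m * (k + 1) * (m + k + 1 + m + 1) * (Nat.factorial (m + k + 1 + m) : ℂ)) * hs
  · subst h
    rw [if_neg (by omega)]
    ring
  · rw [if_neg (by omega), if_neg (by omega)]
    ring

open Polynomial in
/-- The Bessel-type equation `X² p'' + 2 X p' - 2 s p' = n (n+1) p`. -/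
lemma hankelPoly_ode {s : ℂ} (hs : s ^ 2 = -1) (n : ℕ) :
    X * (X * derivative (derivative (hankelPoly s n))) + 2 * (X * derivative (hankelPoly s n))
      - C (2 * s) * derivative (hankelPoly s n) = C ((n : ℂ) * (n + 1)) * hankelPoly s n := by
  ext m
  have h := hankelCoeff_succ hs n m
  have e2 : (2 : ℂ[X]) = C 2 := rfl
  rcases m with _ | _ | m <;>
  · simp only [e2, coeff_sub, coeff_add, coeff_C_mul, coeff_X_mul, coeff_X_mul_zero,
      coeff_derivative, coeff_hankelPoly]
    push_cast at h ⊢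
    linear_combination -h

lemma hankelPoly_coeff_zero (s : ℂ) (n : ℕ) : (hankelPoly s n).coeff 0 = 1 := by
  have h : (Nat.factorial n : ℂ) ≠ 0 := by exact_mod_cast Nat.factorial_ne_zero _
  simp [coeff_hankelPoly, hankelCoeff, h]

open Polynomial in
/-- The Wronskian of the two Hankel functions, stripped of its factor `w²` and written as a polynomial
in `w = 1/z`. Its derivative vanishes by `hankelPoly_ode`. -/
lemma hankelPoly_wronskian {s : ℂ} (hs : s ^ 2 = -1) (n : ℕ) (w : ℂ) :
    -2 * s * (hankelPoly s n).eval w * (hankelPoly (-s) n).eval w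
      - w ^ 2 * ((hankelPoly s n).eval w * (hankelPoly (-s) n).derivative.eval w
        - (hankelPoly (-s) n).eval w * (hankelPoly s n).derivative.eval w) = -2 * s := by
  have o1 := hankelPoly_ode hs n
  have o2 := hankelPoly_ode (s := -s) (by rw [neg_sq, hs]) n
  have c1 := hankelPoly_coeff_zero s n
  have c2 := hankelPoly_coeff_zero (-s) n
  set p := hankelPoly s n
  set q := hankelPoly (-s) n
  have en : C (2 * -s) = - C (2 * s) := by rw [← C_neg]; ring_nf
  rw [en] at o2
  let W : ℂ[X] := -C (2 * s) * p * q - X ^ 2 * (p * derivative q - q * derivative p)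
  have hW : derivative W = 0 := by
    simp only [W, derivative_sub, derivative_mul, derivative_neg, derivative_C, derivative_X_pow]
    simp only [Nat.cast_ofNat, map_ofNat, Nat.add_one_sub_one, pow_one]
    linear_combination q * o1 - p * o2
  have hc := eq_C_of_natDegree_eq_zero (derivative_eq_zero.mp hW)
  have h0 : W.eval w = W.eval 0 := by rw [hc]; simp
  simp only [W, eval_sub, eval_mul, eval_neg, eval_C, eval_pow, eval_X, ← coeff_zero_eq_eval_zero,
    c1, c2] at h0
  linear_combination h0

/-- The Wronskian of the spherical Hankel functions, multiplied by `z²`; for `s = i` it is `-2i`. -/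
lemma hankel_wronskian {s : ℂ} (hs : s ^ 2 = -1) (n : ℕ) {z : ℂ} (hz : z ≠ 0) :
    z ^ 2 * (hankel s n z * hankelDeriv (-s) n z - hankel (-s) n z * hankelDeriv s n z)
      = -2 * s := by
  have hw := hankelPoly_wronskian hs n z⁻¹
  have he : Complex.exp (s * z) * Complex.exp (-s * z) = 1 := by
    rw [← Complex.exp_add]; simp
  have hc : (-s) ^ (n + 1) * s ^ (n + 1) = 1 := by
    rw [← mul_pow, show -s * s = 1 by linear_combination -hs, one_pow]
  have hz1 : z ^ 2 * z⁻¹ ^ 2 = 1 := by field_simp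
  unfold hankel hankelDeriv
  rw [neg_neg]
  set p := (hankelPoly s n).eval z⁻¹
  set q := (hankelPoly (-s) n).eval z⁻¹
  set p' := (hankelPoly s n).derivative.eval z⁻¹
  set q' := (hankelPoly (-s) n).derivative.eval z⁻¹
  calc _ = ((-s) ^ (n + 1) * s ^ (n + 1)) * (Complex.exp (s * z) * Complex.exp (-s * z))
        * (z ^ 2 * z⁻¹ ^ 2) * (-2 * s * p * q - z⁻¹ ^ 2 * (p * q' - q * p')) := by ring
    _ = _ := by rw [hc, he, hz1, hw]; ring

lemma hasDerivAt_hankel (s : ℂ) (n : ℕ) {z : ℂ} (hz : z ≠ 0) :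
    HasDerivAt (hankel s n) (hankelDeriv s n z) z := by
  have hi := hasDerivAt_inv hz
  have hp := ((hankelPoly s n).hasDerivAt z⁻¹).comp z hi
  have he := ((hasDerivAt_id z).const_mul s).cexp
  refine ((he.const_mul ((-s) ^ (n + 1))).mul (hi.mul hp)).congr_deriv ?_
  simp only [hankelDeriv, Function.comp, id, Pi.mul_apply, ← inv_pow]
  ring

/-- The spherical Bessel equation `h'' = -(2/z) h' - (1 - n(n+1)/z²) h`. -/
lemma hasDerivAt_hankelDeriv {s : ℂ} (hs : s ^ 2 = -1) (n : ℕ) {z : ℂ} (hz : z ≠ 0) :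
    HasDerivAt (hankelDeriv s n)
      (-2 * z⁻¹ * hankelDeriv s n z - (1 - (n : ℂ) * (n + 1) * z⁻¹ ^ 2) * hankel s n z) z := by
  have hi := hasDerivAt_inv hz
  have hp := ((hankelPoly s n).hasDerivAt z⁻¹).comp z hi
  have hp' := ((hankelPoly s n).derivative.hasDerivAt z⁻¹).comp z hi
  have he := ((hasDerivAt_id z).const_mul s).cexp
  have ode := congrArg (Polynomial.eval z⁻¹) (hankelPoly_ode hs n)
  simp only [Polynomial.eval_sub, Polynomial.eval_add, Polynomial.eval_mul, Polynomial.eval_C,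
    Polynomial.eval_X, Polynomial.eval_ofNat] at ode
  refine ((he.const_mul ((-s) ^ (n + 1))).mul ((((hi.const_mul s).mul hp).sub
    ((hi.pow 2).mul hp)).sub ((hi.pow 3).mul hp'))).congr_deriv ?_
  simp only [hankelDeriv, hankel, Function.comp, id, Pi.mul_apply, Pi.sub_apply, Pi.pow_apply,
    ← inv_pow]
  push_cast
  linear_combination ((-s) ^ (n + 1) * Complex.exp (s * z) * z⁻¹ ^ 3) * ode
    + ((-s) ^ (n + 1) * Complex.exp (s * z) * z⁻¹ * (hankelPoly s n).eval z⁻¹) * hs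

lemma eval_hankelPoly_inv (s : ℂ) (n : ℕ) (z : ℂ) :
    (hankelPoly s n).eval z⁻¹ = ∑ m ∈ Finset.range (n + 1),
      s ^ m * ((Nat.factorial (n + m) : ℂ) /
        ((Nat.factorial m : ℂ) * (Nat.factorial (n - m) : ℂ) * (2 * z) ^ m)) := by
  rw [hankelPoly, Polynomial.eval_finsetSum]
  refine Finset.sum_congr rfl fun m hm => ?_
  rw [Polynomial.eval_monomial, hankelCoeff, if_pos (by simpa [Nat.lt_succ_iff] using hm), mul_pow]
  simp only [div_eq_mul_inv, mul_inv, inv_pow]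
  ring

lemma sphH1_eq_s7 (n : ℕ) : sphH1 n = hankel Complex.I n := by
  funext z
  rw [sphH1, hankel, eval_hankelPoly_inv]
  ring

lemma sphH2_eq_s7 (n : ℕ) : sphH2 n = hankel (-Complex.I) n := by
  funext z
  rw [sphH2, hankel, eval_hankelPoly_inv, neg_neg]
  ring

lemma conj_sphH2 (n : ℕ) (t : ℝ) : (starRingEnd ℂ) (sphH2 n t) = sphH1 n t := by
  have h2 : (starRingEnd ℂ) 2 = 2 := Complex.conj_eq_iff_real.mpr ⟨2, by norm_num⟩
  simp [sphH1, sphH2, map_sum, ← Complex.exp_conj, h2]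

/-- At a real zero of `h⁽²⁾` the conjugate `h⁽¹⁾` would vanish too, and so would the Wronskian. -/
lemma sphH2_ne_zero_s7 (n : ℕ) {t : ℝ} (ht : t ≠ 0) : sphH2 n t ≠ 0 := by
  intro h0
  have h1 : sphH1 n t = 0 := by rw [← conj_sphH2, h0, map_zero]
  have hW := hankel_wronskian Complex.I_sq n (Complex.ofReal_ne_zero.mpr ht)
  rw [← sphH1_eq_s7, ← sphH2_eq_s7, h0, h1] at hW
  simp at hW

/-- under the same ODE and boundary condition as in Statement 6,
`v(R) = S_n(R)·v(R') + (iκ/2)·S_n(R)·∫_{R'}^{R} t² W_n(R',t) ξ(t) dt`. -/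
theorem stmt7 (κ R' R : ℝ) (hκ : 0 < κ) (hR' : 0 < R') (hRR : R' < R)
    (n : ℕ) (ξ : ℝ → ℂ) (hξ : ContinuousOn ξ (Set.Icc R' R))
    (v v' v'' : ℝ → ℂ)
    (hv : ∀ ρ ∈ Set.Icc R' R, HasDerivWithinAt v (v' ρ) (Set.Icc R' R) ρ)
    (hv' : ∀ ρ ∈ Set.Icc R' R, HasDerivWithinAt v' (v'' ρ) (Set.Icc R' R) ρ)
    (hv'' : ContinuousOn v'' (Set.Icc R' R))
    (hode : ∀ ρ ∈ Set.Ioo R' R,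
      v'' ρ + (2 / (ρ : ℂ)) * v' ρ +
          ((κ : ℂ) ^ 2 - (n : ℂ) * ((n : ℂ) + 1) / (ρ : ℂ) ^ 2) * v ρ = -ξ ρ)
    (hbc : v' R = (zH2 n (κ * R) / (R : ℂ)) * v R) :
    v R = Sfun κ R' n R * v R' +
        (Complex.I * κ / 2) * Sfun κ R' n R *
          ∫ t in R'..R, (t : ℂ) ^ 2 * Wfun κ n R' t * ξ t := by
  have hI : (-Complex.I) ^ 2 = -1 := by rw [neg_sq, Complex.I_sq]
  have hR : 0 < R := hR'.trans hRR
  have hκc : (κ : ℂ) ≠ 0 := Complex.ofReal_ne_zero.mpr hκ.ne'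
  have hRc : (R : ℂ) ≠ 0 := Complex.ofReal_ne_zero.mpr hR.ne'
  have hRc' : (R' : ℂ) ≠ 0 := Complex.ofReal_ne_zero.mpr hR'.ne'
  have nz : ∀ t : ℝ, 0 < t → ((κ * t : ℝ) : ℂ) ≠ 0 := fun t ht =>
    Complex.ofReal_ne_zero.mpr (mul_pos hκ ht).ne'
  -- the derivative of `W_n(R', ·)`
  let U : ℝ → ℂ := fun t => κ * (hankel Complex.I n (κ * R' : ℝ) *
      hankelDeriv (-Complex.I) n (κ * t : ℝ)
    - hankel (-Complex.I) n (κ * R' : ℝ) * hankelDeriv Complex.I n (κ * t : ℝ))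
  have hlin : ∀ t : ℝ, HasDerivAt (fun t : ℝ => ((κ * t : ℝ) : ℂ)) κ t := fun t => by
    simpa using ((hasDerivAt_id t).const_mul κ).ofReal_comp
  have hu : ∀ t : ℝ, 0 < t → HasDerivAt (Wfun κ n R') (U t) t := by
    intro t ht
    have d1 := (hasDerivAt_hankel Complex.I n (nz t ht)).comp t (hlin t)
    have d2 := (hasDerivAt_hankel (-Complex.I) n (nz t ht)).comp t (hlin t)
    have := (d2.const_mul (hankel Complex.I n (κ * R' : ℝ))).sub
      (d1.const_mul (hankel (-Complex.I) n (κ * R' : ℝ)))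
    unfold Wfun
    rw [sphH1_eq_s7, sphH2_eq_s7]
    refine this.congr_deriv ?_
    simp only [U]
    ring
  have hU : ∀ t : ℝ, 0 < t → HasDerivAt U (-(2 / (t : ℂ)) * U t -
      ((κ : ℂ) ^ 2 - (n : ℂ) * ((n : ℂ) + 1) / (t : ℂ) ^ 2) * Wfun κ n R' t) t := by
    intro t ht
    have htc : (t : ℂ) ≠ 0 := Complex.ofReal_ne_zero.mpr ht.ne'
    have d1 := (hasDerivAt_hankelDeriv Complex.I_sq n (nz t ht)).comp t (hlin t)
    have d2 := (hasDerivAt_hankelDeriv hI n (nz t ht)).comp t (hlin t)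
    have := ((d2.const_mul (hankel Complex.I n (κ * R' : ℝ))).sub
      (d1.const_mul (hankel (-Complex.I) n (κ * R' : ℝ)))).const_mul (κ : ℂ)
    refine this.congr_deriv ?_
    simp only [U, Wfun, sphH1_eq_s7, sphH2_eq_s7]
    generalize hankelDeriv (-Complex.I) n (κ * t : ℝ) = a
    generalize hankelDeriv Complex.I n (κ * t : ℝ) = b
    generalize hankel (-Complex.I) n (κ * t : ℝ) = c
    generalize hankel Complex.I n (κ * t : ℝ) = d
    push_cast
    field_simp
    ring
  have hsq : ∀ t : ℝ, HasDerivAt (fun t : ℝ => (t : ℂ) ^ 2) (2 * t) t := fun t => by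
    simpa using (hasDerivAt_id t).ofReal_comp.fun_pow 2
  have hpos : ∀ t ∈ Set.Icc R' R, 0 < t := fun t ht => hR'.trans_le ht.1
  have hWc : ContinuousOn (Wfun κ n R') (Set.Icc R' R) := fun t ht =>
    (hu t (hpos t ht)).continuousAt.continuousWithinAt
  have hUc : ContinuousOn U (Set.Icc R' R) := fun t ht =>
    (hU t (hpos t ht)).continuousAt.continuousWithinAt
  have hsqc : ContinuousOn (fun t : ℝ => (t : ℂ) ^ 2) (Set.Icc R' R) := fun t _ =>
    (hsq t).continuousAt.continuousWithinAt
  have hvc : ContinuousOn v (Set.Icc R' R) := fun t ht => (hv t ht).continuousWithinAt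
  have hvc' : ContinuousOn v' (Set.Icc R' R) := fun t ht => (hv' t ht).continuousWithinAt
  -- Green's formula
  have key := intervalIntegral.integral_eq_sub_of_hasDerivAt_of_le
    (f := fun t : ℝ => (t : ℂ) ^ 2 * (v t * U t - v' t * Wfun κ n R' t))
    (f' := fun t : ℝ => (t : ℂ) ^ 2 * Wfun κ n R' t * ξ t) hRR.le
    (hsqc.mul ((hvc.mul hUc).sub (hvc'.mul hWc)))
    (fun t ht => by
      have hmem := Set.Ioo_subset_Icc_self ht
      have ht0 := hpos t hmem
      have htc : (t : ℂ) ≠ 0 := Complex.ofReal_ne_zero.mpr ht0.ne'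
      have hn := Icc_mem_nhds ht.1 ht.2
      have dv := (hv t hmem).hasDerivAt hn
      have dv' := (hv' t hmem).hasDerivAt hn
      refine ((hsq t).mul ((dv.mul (hU t ht0)).sub (dv'.mul (hu t ht0)))).congr_deriv ?_
      have ho := hode t ht
      have h2 : (t : ℂ) ^ 2 * (2 / (t : ℂ)) = 2 * t := by field_simp
      simp only [Pi.sub_apply, Pi.mul_apply]
      linear_combination (-(t : ℂ) ^ 2 * Wfun κ n R' t) * ho
        - (v t * U t - v' t * Wfun κ n R' t) * h2)
    (((hsqc.mul hWc).mul hξ).intervalIntegrable_of_Icc hRR.le)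
  have hW0 : Wfun κ n R' R' = 0 := by simp only [Wfun]; ring
  have w1 := hankel_wronskian Complex.I_sq n (nz R' hR')
  have w2 := hankel_wronskian Complex.I_sq n (nz R hR)
  have n1 := sphH2_ne_zero_s7 n (mul_pos hκ hR').ne'
  have n2 := sphH2_ne_zero_s7 n (mul_pos hκ hR).ne'
  rw [sphH2_eq_s7] at n1 n2
  have hz2 : v' R = κ * hankelDeriv (-Complex.I) n (κ * R : ℝ) / hankel (-Complex.I) n (κ * R : ℝ)
      * v R := by
    rw [hbc, zH2, sphH2_eq_s7, (hasDerivAt_hankel _ n (nz R hR)).deriv]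
    push_cast
    field_simp
  rw [key, hW0, hz2]
  simp only [Sfun, U, Wfun, sphH1_eq_s7, sphH2_eq_s7]
  generalize hankelDeriv (-Complex.I) n (κ * R : ℝ) = a at *
  generalize hankelDeriv Complex.I n (κ * R : ℝ) = b at *
  generalize hankel (-Complex.I) n (κ * R : ℝ) = c at *
  generalize hankel Complex.I n (κ * R : ℝ) = d at *
  generalize hankelDeriv (-Complex.I) n (κ * R' : ℝ) = a' at *
  generalize hankelDeriv Complex.I n (κ * R' : ℝ) = b' at *
  generalize hankel (-Complex.I) n (κ * R' : ℝ) = c' at *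
  generalize hankel Complex.I n (κ * R' : ℝ) = d' at *
  push_cast at w1 w2
  have e1 : (R : ℂ) ^ 2 * (v R * (κ * (d' * a - c' * b)) - κ * a / c * v R * (d' * c - c' * d))
      = -2 * Complex.I * c' * v R / (κ * c) := by
    field_simp
    linear_combination c' * v R * w2
  have e2 : (R' : ℂ) ^ 2 * (v R' * (κ * (d' * a' - c' * b')) - v' R' * 0)
      = -2 * Complex.I * v R' / κ := by
    field_simp
    linear_combination v R' * w1
  rw [e1, e2]
  field_simp
  linear_combination (c' * v R - c * v R') * Complex.I_sq
end

section
/- For every real number t > 0, lim_{n → ∞} t^{n+1}·h_n^{(1)}(t)/(2n−1)!! = −i and lim_{n → ∞} t^{n+1}·h_n^{(2)}(t)/(2n−1)!! = i, where (2n−1)!! = (2n)!/(2^n·n!). -/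
/-- The normalised Rayleigh coefficient `2 ^ k · n (n - 1) ⋯ (n - k + 1) / (2n (2n - 1) ⋯ (2n - k + 1))`.
It vanishes for `k > n` (as `0 / 0` once `k > 2 * n`), so finite Rayleigh sums are full series. -/
noncomputable def rayleighCoeff (n k : ℕ) : ℝ :=
  2 ^ k * (n.descFactorial k : ℝ) / ((2 * n).descFactorial k : ℝ)

theorem rayleighCoeff_nonneg (n k : ℕ) : 0 ≤ rayleighCoeff n k := by
  unfold rayleighCoeff; positivity

theorem rayleighCoeff_le_one (n k : ℕ) : rayleighCoeff n k ≤ 1 := by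
  have h : 2 ^ k * n.descFactorial k ≤ (2 * n).descFactorial k := by
    induction k with
    | zero => simp
    | succ k ih =>
      rw [Nat.descFactorial_succ, Nat.descFactorial_succ]
      calc 2 ^ (k + 1) * ((n - k) * n.descFactorial k)
          = (2 * (n - k)) * (2 ^ k * n.descFactorial k) := by ring
        _ ≤ _ := Nat.mul_le_mul (by omega) ih
  unfold rayleighCoeff
  apply div_le_one_of_le₀ _ (by positivity)
  exact_mod_cast h

theorem tendsto_rayleighCoeff (k : ℕ) :
    Filter.Tendsto (fun n => rayleighCoeff n k) Filter.atTop (nhds 1) := by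
  induction k with
  | zero => simp [rayleighCoeff]
  | succ k ih =>
    have h0 : Filter.Tendsto (fun n : ℕ => (k : ℝ) / (n : ℝ)) Filter.atTop (nhds 0) :=
      tendsto_const_div_atTop_nhds_zero_nat _
    have h1 : Filter.Tendsto (fun n : ℕ => (2 - 2 * ((k : ℝ) / n)) / (2 - (k : ℝ) / n))
        Filter.atTop (nhds 1) := by
      have h : Filter.Tendsto (fun n : ℕ => (2 - 2 * ((k : ℝ) / n)) / (2 - (k : ℝ) / n))
          Filter.atTop (nhds ((2 - 2 * 0) / (2 - 0))) :=
        ((h0.const_mul 2).const_sub 2).div (h0.const_sub 2) (by norm_num)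
      simpa using h
    have h2 := h1.mul ih
    rw [one_mul] at h2
    refine h2.congr' ?_
    filter_upwards [Filter.eventually_gt_atTop k] with n hn
    have hn0 : (n : ℝ) ≠ 0 := by
      have : n ≠ 0 := by omega
      exact_mod_cast this
    have hkn : (k : ℝ) < n := by exact_mod_cast hn
    have hk0 : (0 : ℝ) ≤ k := by positivity
    have hd : ((2 * n).descFactorial k : ℝ) ≠ 0 := by
      have : (2 * n).descFactorial k ≠ 0 := by
        rw [Ne, Nat.descFactorial_eq_zero_iff_lt]; omega
      exact_mod_cast this
    have h3 : (2 * (n : ℝ) - k) ≠ 0 := by linarith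
    have h4 : (2 - (k : ℝ) / n) ≠ 0 := by
      have : (2 - (k : ℝ) / n) = (2 * (n : ℝ) - k) / n := by field_simp
      rw [this]; exact div_ne_zero h3 hn0
    simp only [rayleighCoeff, Nat.descFactorial_succ]
    rw [Nat.cast_mul, Nat.cast_mul, Nat.cast_sub hn.le, Nat.cast_sub (by omega : k ≤ 2 * n)]
    push_cast
    field_simp
    ring

/-- Dominated convergence against the exponential series. -/
theorem tendsto_sum_rayleighCoeff (w : ℂ) :
    Filter.Tendsto
      (fun n : ℕ => ∑ k ∈ Finset.range (n + 1),
        w ^ k / (Nat.factorial k : ℂ) * (rayleighCoeff n k : ℂ))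
      Filter.atTop (nhds (Complex.exp w)) := by
  have hsum : ∀ n : ℕ, ∑' k, w ^ k / (Nat.factorial k : ℂ) * (rayleighCoeff n k : ℂ)
      = ∑ k ∈ Finset.range (n + 1),
        w ^ k / (Nat.factorial k : ℂ) * (rayleighCoeff n k : ℂ) := by
    intro n
    apply tsum_eq_sum
    intro k hk
    have : n < k := by simpa [Nat.lt_succ_iff] using hk
    simp [rayleighCoeff, Nat.descFactorial_of_lt this]
  simp_rw [← hsum]
  rw [Complex.exp_eq_exp_ℂ, NormedSpace.exp_eq_tsum_div]
  refine tendsto_tsum_of_dominated_convergence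
    (bound := fun k => ‖w‖ ^ k / (Nat.factorial k : ℝ)) ?_ ?_ ?_
  · exact Real.summable_pow_div_factorial ‖w‖
  · intro k
    have h := (Complex.continuous_ofReal.tendsto _).comp (tendsto_rayleighCoeff k)
    simpa using h.const_mul (w ^ k / (Nat.factorial k : ℂ))
  · refine Filter.Eventually.of_forall fun n k => ?_
    rw [norm_mul, norm_div, norm_pow, Complex.norm_natCast, Complex.norm_real,
      Real.norm_of_nonneg (rayleighCoeff_nonneg n k)]
    exact mul_le_of_le_one_right (by positivity) (rayleighCoeff_le_one n k)

/-- Reversing the order of summation in the Rayleigh formula turns it into a deformation of the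
exponential series of `-ε z`. Both kinds are covered at once, by `ε = ± I`. -/
theorem rayleigh_normalised (ε z : ℂ) (hε : ε * ε = -1) (hz : z ≠ 0) (n : ℕ) :
    z ^ (n + 1) * ((-ε) ^ (n + 1) * (Complex.exp (ε * z) / z) *
      ∑ m ∈ Finset.range (n + 1),
        ε ^ m * ((Nat.factorial (n + m) : ℂ) /
          ((Nat.factorial m : ℂ) * (Nat.factorial (n - m) : ℂ) * (2 * z) ^ m))) /
      ((Nat.factorial (2 * n) : ℂ) / ((2 : ℂ) ^ n * (Nat.factorial n : ℂ)))
    = -ε * Complex.exp (ε * z) * ∑ k ∈ Finset.range (n + 1),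
        (-ε * z) ^ k / (Nat.factorial k : ℂ) * (rayleighCoeff n k : ℂ) := by
  rw [← Finset.sum_range_reflect]
  have key : ∀ k ∈ Finset.range (n + 1),
      z ^ n * (-ε) ^ n * ((2 : ℂ) ^ n * (Nat.factorial n : ℂ) / (Nat.factorial (2 * n) : ℂ)) *
        (ε ^ (n + 1 - 1 - k) * ((Nat.factorial (n + (n + 1 - 1 - k)) : ℂ) /
          ((Nat.factorial (n + 1 - 1 - k) : ℂ) * (Nat.factorial (n - (n + 1 - 1 - k)) : ℂ) *
            (2 * z) ^ (n + 1 - 1 - k))))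
      = (-ε * z) ^ k / (Nat.factorial k : ℂ) * (rayleighCoeff n k : ℂ) := by
    intro k hk
    obtain ⟨m, rfl⟩ : ∃ m, n = m + k :=
      ⟨n - k, by have := Finset.mem_range.mp hk; omega⟩
    have e1 : m + k + 1 - 1 - k = m := by omega
    have e2 : m + k - m = k := by omega
    rw [e1, e2]
    have f1 : ((m + k).factorial : ℂ) = (m.factorial : ℂ) * ((m + k).descFactorial k : ℂ) := by
      have := Nat.factorial_mul_descFactorial (show k ≤ m + k by omega)
      rw [show m + k - k = m by omega] at this
      exact_mod_cast this.symm
    have f2 : ((2 * (m + k)).factorial : ℂ)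
        = ((m + k + m).factorial : ℂ) * ((2 * (m + k)).descFactorial k : ℂ) := by
      have := Nat.factorial_mul_descFactorial (show k ≤ 2 * (m + k) by omega)
      rw [show 2 * (m + k) - k = m + k + m by omega] at this
      exact_mod_cast this.symm
    have hd : ((2 * (m + k)).descFactorial k : ℂ) ≠ 0 := by
      have : (2 * (m + k)).descFactorial k ≠ 0 := by
        rw [Ne, Nat.descFactorial_eq_zero_iff_lt]; omega
      exact_mod_cast this
    have g1 : (m.factorial : ℂ) ≠ 0 := by exact_mod_cast m.factorial_ne_zero
    have g2 : (k.factorial : ℂ) ≠ 0 := by exact_mod_cast k.factorial_ne_zero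
    have g3 : ((m + k + m).factorial : ℂ) ≠ 0 := by exact_mod_cast (m + k + m).factorial_ne_zero
    have hε' : (-ε) ^ (m + k) * ε ^ m = (-ε) ^ k := by
      rw [pow_add, mul_right_comm, ← mul_pow, neg_mul, hε, neg_neg, one_pow, one_mul]
    rw [f1, f2, rayleighCoeff, mul_pow (-ε) z k, ← hε']
    push_cast
    generalize (-ε) ^ (m + k) = a
    generalize ε ^ m = b
    rw [mul_pow, pow_add, pow_add]
    field_simp
  rw [← Finset.sum_congr rfl key, ← Finset.mul_sum]
  have g : ((2 * n).factorial : ℂ) ≠ 0 := by exact_mod_cast (2 * n).factorial_ne_zero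
  have g' : (n.factorial : ℂ) ≠ 0 := by exact_mod_cast n.factorial_ne_zero
  generalize (∑ j ∈ Finset.range (n + 1), _ : ℂ) = S
  rw [pow_succ z, pow_succ (-ε)]
  field_simp

theorem tendsto_rayleigh_normalised (ε z : ℂ) (hε : ε * ε = -1) (hz : z ≠ 0) :
    Filter.Tendsto (fun n : ℕ =>
      z ^ (n + 1) * ((-ε) ^ (n + 1) * (Complex.exp (ε * z) / z) *
      ∑ m ∈ Finset.range (n + 1),
        ε ^ m * ((Nat.factorial (n + m) : ℂ) /
          ((Nat.factorial m : ℂ) * (Nat.factorial (n - m) : ℂ) * (2 * z) ^ m))) /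
      ((Nat.factorial (2 * n) : ℂ) / ((2 : ℂ) ^ n * (Nat.factorial n : ℂ))))
      Filter.atTop (nhds (-ε)) := by
  simp_rw [rayleigh_normalised ε z hε hz]
  have h := (tendsto_sum_rayleighCoeff (-ε * z)).const_mul (-ε * Complex.exp (ε * z))
  rwa [mul_assoc, ← Complex.exp_add, neg_mul ε z, add_neg_cancel, Complex.exp_zero,
    mul_one, ← neg_mul ε z] at h

/-- for every `t > 0`,
`lim_{n→∞} t^{n+1}·h_n^{(1)}(t)/(2n−1)!! = −i` and
`lim_{n→∞} t^{n+1}·h_n^{(2)}(t)/(2n−1)!! = i`, where `(2n−1)!! = (2n)!/(2^n·n!)`. -/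
theorem stmt18 (t : ℝ) (ht : 0 < t) :
    Filter.Tendsto
      (fun n : ℕ =>
        (t : ℂ) ^ (n + 1) * sphH1 n (t : ℂ) /
          ((Nat.factorial (2 * n) : ℂ) / ((2 : ℂ) ^ n * (Nat.factorial n : ℂ))))
      Filter.atTop (nhds (-Complex.I)) ∧
    Filter.Tendsto
      (fun n : ℕ =>
        (t : ℂ) ^ (n + 1) * sphH2 n (t : ℂ) /
          ((Nat.factorial (2 * n) : ℂ) / ((2 : ℂ) ^ n * (Nat.factorial n : ℂ))))
      Filter.atTop (nhds Complex.I) := by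
  have hz : (t : ℂ) ≠ 0 := by exact_mod_cast ht.ne'
  refine ⟨tendsto_rayleigh_normalised Complex.I t Complex.I_mul_I hz, ?_⟩
  have h := tendsto_rayleigh_normalised (-Complex.I) t (by simp) hz
  rw [neg_neg] at h
  exact h
end
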